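/- (Donsker–Varadhan variational representation.) Let P and Q be probability measures on a measurable space X with P absolutely continuous with respect to Q and with finite Kullback–Leibler divergence. Then D_KL(P‖Q) equals the supremum, over all bounded measurable functions T : X → ℝ, of the quantity ∫ T dP − log (∫ e^T dQ). -/

import Mathlib

open MeasureTheory

/-- The Kullback–Leibler divergence `∫ log (dP/dQ) dP`. -/
noncomputable def klDiv {X : Type*} [MeasurableSpace X]
    (P Q : Measure X) : ℝ :=
  ∫ x, Real.log ((P.rnDeriv Q x).toReal) ∂P

lemma dv_upper {X : Type*} [MeasurableSpace X] (P Q : Measure X)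
    [IsProbabilityMeasure P] [IsProbabilityMeasure Q]
    (hPQ : P ≪ Q)
    (hKL : Integrable (fun x => Real.log ((P.rnDeriv Q x).toReal)) P)
    (T : X → ℝ) (hT : Measurable T) (C : ℝ) (hC : ∀ x, |T x| ≤ C) :
    ∫ x, T x ∂P - Real.log (∫ x, Real.exp (T x) ∂Q) ≤ klDiv P Q := by
  have hTP : Integrable T P :=
    Integrable.of_bound hT.aestronglyMeasurable C (Filter.Eventually.of_forall hC)
  have hTQ : Integrable (fun x => Real.exp (T x)) Q := by
    refine Integrable.of_bound hT.exp.aestronglyMeasurable (Real.exp C)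
      (Filter.Eventually.of_forall fun x => ?_)
    rw [Real.norm_eq_abs, abs_of_pos (Real.exp_pos _)]
    exact Real.exp_le_exp.mpr ((le_abs_self _).trans (hC x))
  have hKL' : Integrable (llr P Q) P := hKL
  have := isProbabilityMeasure_tilted hTQ
  have h1 := integral_llr_tilted_right hPQ hTP hTQ hKL'
  have h2 := InformationTheory.integral_llr_add_sub_measure_univ_nonneg
    (hPQ.trans (absolutelyContinuous_tilted hTQ)) (integrable_llr_tilted_right hPQ hTP hKL' hTQ)
  simp only [probReal_univ] at h2
  have h3 : klDiv P Q = ∫ x, llr P Q x ∂P := rfl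
  linarith

/-- Truncated log-likelihood ratio. -/
noncomputable def dvT {X : Type*} (r : X → ℝ) (n : ℕ) (x : X) : ℝ :=
  if r x = 0 then -(n : ℝ) else max (-(n : ℝ)) (min n (Real.log (r x)))

lemma dvT_abs_le {X : Type*} (r : X → ℝ) (n : ℕ) (x : X) : |dvT r n x| ≤ n := by
  have hn : (0 : ℝ) ≤ n := n.cast_nonneg
  unfold dvT
  split_ifs
  · simp
  · rw [abs_le]
    exact ⟨le_max_left _ _, max_le (by linarith) (min_le_left _ _)⟩

lemma dvT_measurable {X : Type*} [MeasurableSpace X] (r : X → ℝ) (hr : Measurable r) (n : ℕ) :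
    Measurable (dvT r n) := by
  unfold dvT
  exact Measurable.ite (hr (measurableSet_singleton 0)) measurable_const
    (measurable_const.max (measurable_const.min hr.log))

lemma dvT_exp_le {X : Type*} (r : X → ℝ) (hr : ∀ x, 0 ≤ r x) (n : ℕ) (x : X) :
    Real.exp (dvT r n x) ≤ 1 + r x := by
  have hn : (0 : ℝ) ≤ n := n.cast_nonneg
  have h1 : Real.exp (-(n : ℝ)) ≤ 1 := Real.exp_le_one_iff.mpr (by linarith)
  have := hr x
  unfold dvT
  split_ifs with h
  · linarith
  · have hp : 0 < r x := lt_of_le_of_ne this (Ne.symm h)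
    rcases max_choice (-(n : ℝ)) (min n (Real.log (r x))) with h2 | h2 <;> rw [h2]
    · linarith
    · have : Real.exp (min n (Real.log (r x))) ≤ r x := by
        rw [← Real.le_log_iff_exp_le hp]
        exact min_le_right _ _
      linarith

lemma dvT_eventually {X : Type*} (r : X → ℝ) (x : X) (h : r x ≠ 0) :
    ∀ᶠ n : ℕ in Filter.atTop, dvT r n x = Real.log (r x) := by
  obtain ⟨N, hN⟩ := exists_nat_ge |Real.log (r x)|
  filter_upwards [Filter.eventually_ge_atTop N] with n hn
  have h1 : |Real.log (r x)| ≤ n := hN.trans (by exact_mod_cast hn)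
  rw [abs_le] at h1
  simp only [dvT, h, if_false]
  rw [min_eq_right h1.2, max_eq_right h1.1]

lemma dvT_exp_tendsto {X : Type*} (r : X → ℝ) (hr : ∀ x, 0 ≤ r x) (x : X) :
    Filter.Tendsto (fun n => Real.exp (dvT r n x)) Filter.atTop (nhds (r x)) := by
  by_cases h : r x = 0
  · simp only [dvT, h, if_true]
    exact Real.tendsto_exp_neg_atTop_nhds_zero.comp tendsto_natCast_atTop_atTop
  · refine tendsto_const_nhds.congr' ?_
    filter_upwards [dvT_eventually r x h] with n hn
    rw [hn, Real.exp_log (lt_of_le_of_ne (hr x) (Ne.symm h))]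

lemma dvT_abs_le_log {X : Type*} (r : X → ℝ) (n : ℕ) (x : X) (h : r x ≠ 0) :
    |dvT r n x| ≤ |Real.log (r x)| := by
  have hn : (0 : ℝ) ≤ n := n.cast_nonneg
  simp only [dvT, h, if_false]
  rw [abs_le]
  constructor
  · refine le_max_of_le_right (le_min ?_ (neg_abs_le _))
    have := abs_nonneg (Real.log (r x))
    linarith
  · refine max_le ?_ ((min_le_right _ _).trans (le_abs_self _))
    have := abs_nonneg (Real.log (r x))
    linarith

/-- Donsker–Varadhan variational representation: `D_KL(P‖Q)` is the supremum
over bounded measurable functions `T` of `∫ T dP − log (∫ e^T dQ)`. -/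
theorem donsker_varadhan_representation
    {X : Type*} [MeasurableSpace X] (P Q : Measure X)
    [IsProbabilityMeasure P] [IsProbabilityMeasure Q]
    (hPQ : P ≪ Q)
    (hKL : Integrable (fun x => Real.log ((P.rnDeriv Q x).toReal)) P) :
    klDiv P Q =
      sSup { r : ℝ | ∃ T : X → ℝ, Measurable T ∧ (∃ C : ℝ, ∀ x, |T x| ≤ C) ∧
        r = ∫ x, T x ∂P - Real.log (∫ x, Real.exp (T x) ∂Q) } := by
  have hub : klDiv P Q ∈ upperBounds { r : ℝ | ∃ T : X → ℝ, Measurable T ∧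
      (∃ C : ℝ, ∀ x, |T x| ≤ C) ∧
        r = ∫ x, T x ∂P - Real.log (∫ x, Real.exp (T x) ∂Q) } := by
    rintro _ ⟨T, hT, ⟨C, hC⟩, rfl⟩
    exact dv_upper P Q hPQ hKL T hT C hC
  apply le_antisymm
  · set r : X → ℝ := fun x => (P.rnDeriv Q x).toReal with hrdef
    have hr0 : ∀ x, 0 ≤ r x := fun x => ENNReal.toReal_nonneg
    have hrm : Measurable r := (Measure.measurable_rnDeriv P Q).ennreal_toReal
    have hrne : ∀ᵐ x ∂P, r x ≠ 0 := by
      filter_upwards [Measure.rnDeriv_pos hPQ,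
        hPQ.ae_le (Measure.rnDeriv_lt_top P Q)] with x h1 h2
      exact (ENNReal.toReal_pos h1.ne' h2.ne).ne'
    have hri : Integrable r Q := Measure.integrable_toReal_rnDeriv
    have hr1 : ∫ x, r x ∂Q = 1 := by
      rw [Measure.integral_toReal_rnDeriv hPQ]
      simp
    have t1 : Filter.Tendsto (fun n => ∫ x, dvT r n x ∂P) Filter.atTop
        (nhds (klDiv P Q)) := by
      refine tendsto_integral_of_dominated_convergence (fun x => |Real.log (r x)|)
        (fun n => (dvT_measurable r hrm n).aestronglyMeasurable) hKL.abs ?_ ?_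
      · intro n
        filter_upwards [hrne] with x hx
        exact dvT_abs_le_log r n x hx
      · filter_upwards [hrne] with x hx
        refine tendsto_const_nhds.congr' ?_
        filter_upwards [dvT_eventually r x hx] with n hn
        rw [hn]
    have t2 : Filter.Tendsto (fun n => ∫ x, Real.exp (dvT r n x) ∂Q) Filter.atTop
        (nhds 1) := by
      rw [← hr1]
      refine tendsto_integral_of_dominated_convergence (fun x => 1 + r x)
        (fun n => (dvT_measurable r hrm n).exp.aestronglyMeasurable)
        ((integrable_const 1).add hri) ?_ ?_
      · intro n
        refine Filter.Eventually.of_forall fun x => ?_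
        rw [Real.norm_eq_abs, abs_of_pos (Real.exp_pos _)]
        exact dvT_exp_le r hr0 n x
      · exact Filter.Eventually.of_forall fun x => dvT_exp_tendsto r hr0 x
    have t3 := t1.sub (t2.log one_ne_zero)
    rw [Real.log_one, sub_zero] at t3
    refine le_of_tendsto' t3 fun n => le_csSup ⟨_, hub⟩ ?_
    exact ⟨dvT r n, dvT_measurable r hrm n, ⟨n, dvT_abs_le r n⟩, rfl⟩
  · refine csSup_le ⟨_, fun _ => 0, measurable_const, ⟨0, by simp⟩, rfl⟩ hub
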